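/- arXiv:2308.04910 — 6 statements merged into one kernel-verified Lean document; each statement's English description precedes it below -/
import Mathlib

section
/- For all natural numbers ℓ and d there exists a natural number e such that for every ℓ' < ℓ and all tuples r = (r_1, …, r_{ℓ'}) and s = (s_1, …, s_{ℓ'}) of natural numbers with r_i < d and s_i < d for all i, the equality of power sums ∑_{i=1}^{ℓ'} r_i^e = ∑_{i=1}^{ℓ'} s_i^e implies that there is a permutation σ of {1, …, ℓ'} with r_i = s_{σ(i)} for all i. -/
/-!
If `e > ℓ * d`, then `ℓ * k ^ e < (k + 1) ^ e` for all `k < d` (`mul_pow_lt_succ_pow`, by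
Bernoulli's inequality), so fewer than `ℓ` summands `k ^ e` with `k ≤ a` cannot reach
`(a + 1) ^ e`. Hence the `e`-th power sum of a multiset of fewer than `ℓ` numbers below `d`
determines its maximum, and removing this maximum repeatedly recovers the whole multiset
(`multiset_eq_of_powerSum_eq`).
-/

/-- The first two terms of the binomial expansion of `(k + 1) ^ (n + 1)`. -/
lemma pow_mul_le_succ_pow (k n : ℕ) : k ^ n * (k + n + 1) ≤ (k + 1) ^ (n + 1) := by
  induction n with
  | zero => simp
  | succ n ih =>
    calc k ^ (n + 1) * (k + (n + 1) + 1)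
        ≤ k ^ n * (k + n + 1) * (k + 1) := by
          rw [pow_succ, mul_assoc, mul_assoc]
          exact Nat.mul_le_mul_left _ (by nlinarith)
      _ ≤ (k + 1) ^ (n + 1) * (k + 1) := Nat.mul_le_mul_right _ ih
      _ = (k + 1) ^ (n + 1 + 1) := (pow_succ _ _).symm

lemma mul_pow_lt_succ_pow (ℓ d k : ℕ) (hk : k < d) :
    ℓ * k ^ (ℓ * d + 1) < (k + 1) ^ (ℓ * d + 1) := by
  rcases Nat.eq_zero_or_pos k with rfl | hpos
  · simp
  · have h1 : ℓ * k ≤ ℓ * d := Nat.mul_le_mul_left _ hk.le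
    calc ℓ * k ^ (ℓ * d + 1) = k ^ (ℓ * d) * (ℓ * k) := by ring
      _ < k ^ (ℓ * d) * (k + ℓ * d + 1) :=
          Nat.mul_lt_mul_of_pos_left (by omega) (pow_pos hpos _)
      _ ≤ _ := pow_mul_le_succ_pow _ _

/-- If `a` bounds `M` and some element of `N` exceeds `a`, the power sum of `M` is smaller. -/
lemma powerSum_lt {ℓ d a b : ℕ} {M N : Multiset ℕ} (hM : M.card < ℓ)
    (ha : ∀ x ∈ M, x ≤ a) (hb : b ∈ N) (hbd : b < d) (hab : a < b) :
    (M.map (· ^ (ℓ * d + 1))).sum < (N.map (· ^ (ℓ * d + 1))).sum := by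
  calc (M.map (· ^ (ℓ * d + 1))).sum
      ≤ (M.map (· ^ (ℓ * d + 1))).card • a ^ (ℓ * d + 1) := by
        apply Multiset.sum_le_card_nsmul
        intro x hx
        obtain ⟨y, hy, rfl⟩ := Multiset.mem_map.1 hx
        exact Nat.pow_le_pow_left (ha y hy) _
    _ ≤ ℓ * a ^ (ℓ * d + 1) := by
        rw [Multiset.card_map, smul_eq_mul]
        exact Nat.mul_le_mul_right _ hM.le
    _ < (a + 1) ^ (ℓ * d + 1) := mul_pow_lt_succ_pow _ _ _ (hab.trans hbd)
    _ ≤ b ^ (ℓ * d + 1) := Nat.pow_le_pow_left hab _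
    _ ≤ _ := Multiset.single_le_sum (fun _ _ => Nat.zero_le _) _
        (Multiset.mem_map_of_mem (· ^ (ℓ * d + 1)) hb)

lemma exists_max_mem {M : Multiset ℕ} (h : 0 < M.card) : ∃ a ∈ M, ∀ x ∈ M, x ≤ a := by
  obtain ⟨y, hy⟩ := Multiset.card_pos_iff_exists_mem.1 h
  obtain ⟨a, ha, hmax⟩ := M.toFinset.exists_max_image id ⟨y, Multiset.mem_toFinset.2 hy⟩
  exact ⟨a, Multiset.mem_toFinset.1 ha, fun x hx => hmax x (Multiset.mem_toFinset.2 hx)⟩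

lemma multiset_eq_of_powerSum_eq (ℓ d n : ℕ) (hn : n < ℓ) (M N : Multiset ℕ)
    (hMn : M.card = n) (hNn : N.card = n) (hM : ∀ x ∈ M, x < d) (hN : ∀ x ∈ N, x < d)
    (h : (M.map (· ^ (ℓ * d + 1))).sum = (N.map (· ^ (ℓ * d + 1))).sum) : M = N := by
  induction n generalizing M N with
  | zero => rw [Multiset.card_eq_zero.1 hMn, Multiset.card_eq_zero.1 hNn]
  | succ n ih =>
    obtain ⟨a, haM, ha⟩ := exists_max_mem (M := M) (by omega)
    obtain ⟨b, hbN, hb⟩ := exists_max_mem (M := N) (by omega)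
    rcases lt_trichotomy a b with hab | rfl | hab
    · exact absurd h (powerSum_lt (hMn ▸ hn) ha hbN (hN b hbN) hab).ne
    · obtain ⟨M', rfl⟩ := Multiset.exists_cons_of_mem haM
      obtain ⟨N', rfl⟩ := Multiset.exists_cons_of_mem hbN
      rw [Multiset.card_cons] at hMn hNn
      simp only [Multiset.map_cons, Multiset.sum_cons] at h
      rw [ih (by omega) M' N' (by omega) (by omega)
        (fun x hx => hM x (Multiset.mem_cons_of_mem hx))
        (fun x hx => hN x (Multiset.mem_cons_of_mem hx)) (by omega)]
    · exact absurd h (powerSum_lt (hNn ▸ hn) hb haM (hM a haM) hab).ne'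

/-- For all `ℓ d : ℕ` there is an exponent `e` such that for all `ℓ' < ℓ` and all
tuples `r s : Fin ℓ' → ℕ` with entries `< d`, equality of the `e`-th power sums
implies the tuples agree up to a permutation. -/
theorem stmt_0 (ℓ d : ℕ) :
    ∃ e : ℕ, ∀ ℓ' : ℕ, ℓ' < ℓ → ∀ r s : Fin ℓ' → ℕ,
      (∀ i, r i < d) → (∀ i, s i < d) →
      (∑ i, r i ^ e) = (∑ i, s i ^ e) →
      ∃ σ : Equiv.Perm (Fin ℓ'), ∀ i, r i = s (σ i) := by
  refine ⟨ℓ * d + 1, fun n hn r s hr hs h => ?_⟩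
  have key : Finset.univ.val.map r = Finset.univ.val.map s := by
    apply multiset_eq_of_powerSum_eq ℓ d n hn
    · simp
    · simp
    · simpa using hr
    · simpa using hs
    · rw [Multiset.map_map, Multiset.map_map]
      exact h
  -- Equal multiplicities make the fibres of `r` and `s` equinumerous; the permutation glues
  -- bijections between them.
  have hfib : ∀ c, Nonempty ({i // r i = c} ≃ {i // s i = c}) := fun c => by
    rw [← Fintype.card_eq, Fintype.card_subtype, Fintype.card_subtype]
    have hc := congrArg (Multiset.count c) key
    rw [Multiset.count_map, Multiset.count_map] at hc
    simp only [eq_comm (a := c)] at hc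
    exact hc
  exact ⟨Equiv.ofFiberEquiv fun c => (hfib c).some,
    fun i => (Equiv.ofFiberEquiv_map _ i).symm⟩
end

section
/- Let n ≥ 0 and let c, e ≥ 1 be natural numbers. There exists a variable assignment α : Fin n → ℕ such that the induced evaluation semiring homomorphism h : ℕ[x_1,…,x_n] → ℕ (evaluating each multivariate polynomial over ℕ at α) restricts to a bijection from ℕ[X](c,e), the set of polynomials all of whose coefficients are smaller than c and in which every variable occurs in every monomial with exponent smaller than e, onto the set {0, 1, …, c^{e^n} − 1}. -/
/-!
The assignment is `α i = c ^ (e ^ i)`. A monomial with exponents `m i < e` evaluates to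
`c ^ (∑ i, m i * e ^ i)`, and by uniqueness of base-`e` expansions with `n` digits the exponents
`∑ i, m i * e ^ i` run exactly once through `0, …, e ^ n - 1` (`exponentOf`). Hence the value of a
polynomial in the given set is a base-`c` expansion with `e ^ n` digits, whose digits are its
coefficients (`eval_eq_sum_digits`), and the claim is uniqueness of base-`c` expansions. Both
expansions are instances of `finFunctionFinEquiv : (Fin n → Fin m) ≃ Fin (m ^ n)`.
-/

/-- The exponent vector whose entries are the `n` base-`e` digits of `k < e ^ n`, least significant
digit first. -/
noncomputable def exponentOf (n e : ℕ) (k : Fin (e ^ n)) : Fin n →₀ ℕ :=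
  Finsupp.equivFunOnFinite.symm fun i => (finFunctionFinEquiv.symm k i : ℕ)

lemma exponentOf_apply (n e : ℕ) (k : Fin (e ^ n)) (i : Fin n) :
    exponentOf n e k i = (finFunctionFinEquiv.symm k i : ℕ) := rfl

lemma exponentOf_injective (n e : ℕ) : Function.Injective (exponentOf n e) := by
  intro k l h
  apply finFunctionFinEquiv.symm.injective
  funext i
  apply Fin.ext
  rw [← exponentOf_apply, ← exponentOf_apply, h]

lemma exists_exponentOf_eq {n e : ℕ} (m : Fin n →₀ ℕ) (hm : ∀ x, m x < e) :
    ∃ k, exponentOf n e k = m := by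
  refine ⟨finFunctionFinEquiv fun i => ⟨m i, hm i⟩, ?_⟩
  ext i
  simp [exponentOf_apply]

lemma prod_pow_exponentOf (n c e : ℕ) (k : Fin (e ^ n)) :
    ∏ i : Fin n, (c ^ e ^ (i : ℕ)) ^ exponentOf n e k i = c ^ (k : ℕ) := by
  have hk : (k : ℕ) = ∑ i : Fin n, exponentOf n e k i * e ^ (i : ℕ) := by
    conv_lhs => rw [← finFunctionFinEquiv.apply_symm_apply k, finFunctionFinEquiv_apply]
    rfl
  rw [hk, ← Finset.prod_pow_eq_pow_sum]
  refine Finset.prod_congr rfl fun i _ => ?_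
  rw [← pow_mul, mul_comm]

/-- At `x_i = c ^ (e ^ i)`, a polynomial with exponents `< e` is the sum of its coefficients weighted by
successive powers of `c`, so these are base-`c` digits once they are `< c`. -/
lemma eval_eq_sum_digits {n c e : ℕ} (p : MvPolynomial (Fin n) ℕ)
    (hp : ∀ m ∈ p.support, ∀ x, m x < e) :
    MvPolynomial.eval (fun i : Fin n => c ^ e ^ (i : ℕ)) p =
      ∑ k : Fin (e ^ n), p.coeff (exponentOf n e k) * c ^ (k : ℕ) := by
  have hsub : p.support ⊆ Finset.univ.map ⟨exponentOf n e, exponentOf_injective n e⟩ := by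
    intro m hm
    obtain ⟨k, hk⟩ := exists_exponentOf_eq m (hp m hm)
    exact Finset.mem_map.2 ⟨k, Finset.mem_univ _, hk⟩
  rw [MvPolynomial.eval_eq', Finset.sum_subset hsub, Finset.sum_map]
  · refine Finset.sum_congr rfl fun k _ => ?_
    rw [← prod_pow_exponentOf n c e k]
    rfl
  · intro m _ hm
    rw [MvPolynomial.notMem_support_iff.1 hm, zero_mul]

/-- There is a variable assignment `α : Fin n → ℕ` such that evaluation at `α`
is a bijection from the set of multivariate polynomials over `ℕ` with all
coefficients `< c` and all exponents `< e` onto `{0, …, c ^ e ^ n - 1}`. -/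
theorem stmt_1 (n c e : ℕ) (hc : 1 ≤ c) (he : 1 ≤ e) :
    ∃ α : Fin n → ℕ,
      Set.BijOn (MvPolynomial.eval α)
        {p : MvPolynomial (Fin n) ℕ |
          (∀ m, p.coeff m < c) ∧ ∀ m ∈ p.support, ∀ x, m x < e}
        (Set.Iio (c ^ e ^ n)) := by
  have key : ∀ (p : MvPolynomial (Fin n) ℕ) (h1 : ∀ m, p.coeff m < c),
      (∀ m ∈ p.support, ∀ x, m x < e) →
      MvPolynomial.eval (fun i : Fin n => c ^ e ^ (i : ℕ)) p =
        (finFunctionFinEquiv fun k : Fin (e ^ n) =>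
          (⟨p.coeff (exponentOf n e k), h1 _⟩ : Fin c) : ℕ) := by
    intro p h1 h2
    rw [eval_eq_sum_digits p h2, finFunctionFinEquiv_apply]
  refine ⟨fun i => c ^ e ^ (i : ℕ), ?_, ?_, ?_⟩
  · rintro p ⟨h1, h2⟩
    rw [Set.mem_Iio, key p h1 h2]
    exact Fin.is_lt _
  · rintro p ⟨hp1, hp2⟩ q ⟨hq1, hq2⟩ h
    rw [key p hp1 hp2, key q hq1 hq2] at h
    have h' := finFunctionFinEquiv.injective (Fin.ext h)
    ext m
    by_cases hm : ∀ x, m x < e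
    · obtain ⟨k, rfl⟩ := exists_exponentOf_eq m hm
      exact congrArg Fin.val (congrFun h' k)
    · rw [MvPolynomial.notMem_support_iff.1 fun hmp => hm (hp2 m hmp),
        MvPolynomial.notMem_support_iff.1 fun hmq => hm (hq2 m hmq)]
  · intro N hN
    -- The coefficients of the preimage are the base-`c` digits of `N`.
    set f : Fin (e ^ n) → Fin c := finFunctionFinEquiv.symm ⟨N, hN⟩ with hf
    set p : MvPolynomial (Fin n) ℕ :=
      ∑ k, MvPolynomial.monomial (exponentOf n e k) (f k : ℕ) with hp
    have hcoeff : ∀ k, p.coeff (exponentOf n e k) = f k := by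
      intro k
      simp [hp, MvPolynomial.coeff_sum, MvPolynomial.coeff_monomial,
        (exponentOf_injective n e).eq_iff]
    have hzero : ∀ m, (¬ ∀ x, m x < e) → p.coeff m = 0 := by
      intro m hm
      rw [hp, MvPolynomial.coeff_sum]
      refine Finset.sum_eq_zero fun k _ => ?_
      rw [MvPolynomial.coeff_monomial, if_neg]
      rintro rfl
      exact hm fun x => Fin.is_lt _
    have h1 : ∀ m, p.coeff m < c := by
      intro m
      by_cases hm : ∀ x, m x < e
      · obtain ⟨k, rfl⟩ := exists_exponentOf_eq m hm
        rw [hcoeff]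
        exact Fin.is_lt _
      · rw [hzero m hm]
        exact hc
    have h2 : ∀ m ∈ p.support, ∀ x, m x < e := by
      intro m hm
      by_contra hne
      exact MvPolynomial.mem_support_iff.1 hm (hzero m hne)
    refine ⟨p, ⟨h1, h2⟩, ?_⟩
    rw [key p h1 h2]
    have hfun : (fun k : Fin (e ^ n) => (⟨p.coeff (exponentOf n e k), h1 _⟩ : Fin c)) = f := by
      funext k
      exact Fin.ext (hcoeff k)
    rw [hfun, hf, Equiv.apply_symm_apply]
end

section
/- Let X be a finite type and let p and q be sets of monomials (functions X → ℕ∞) that are both antichains with respect to the pointwise order and satisfy p ≠ q. Then there exists a monomial m belonging to exactly one of p and q such that, setting Y := {x ∈ X : m(x) ≠ ∞}, no monomial m' of the other set Y-absorbs m, i.e. no m' in the other set satisfies m'(x) ≤ m(x) for all x ∈ Y. (In particular ∑_{x ∈ Y} m(x) is finite.) -/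
/-!
Since `m' x ≤ m x` is automatic when `m x = ⊤`, a monomial `Y`-absorbs `m` exactly when it
absorbs `m`. If the conclusion failed, every monomial of each antichain would be absorbed by
one of the other, and two antichains with this property coincide
(`subset_of_mutual_absorption`, applied in both directions).
-/

/-- For `m ∈ s`, going down to some `m' ∈ t` and again to some `m'' ∈ s` forces `m'' = m`
because `s` is an antichain, hence `m = m' ∈ t`. -/
theorem subset_of_mutual_absorption {α : Type*} [PartialOrder α] {s t : Set α}
    (hs : IsAntichain (· ≤ ·) s) (hst : ∀ m ∈ s, ∃ m' ∈ t, m' ≤ m)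
    (hts : ∀ m ∈ t, ∃ m' ∈ s, m' ≤ m) : s ⊆ t := by
  intro m hm
  obtain ⟨m', hm', h1⟩ := hst m hm
  obtain ⟨m'', hm'', h2⟩ := hts m' hm'
  have h3 : m'' = m := hs.eq hm'' hm (h2.trans h1)
  have h4 : m' = m := le_antisymm h1 (h3 ▸ h2)
  exact (h4 ▸ hm' : m ∈ t)

/-- For two distinct antichains `p ≠ q` of monomials `X → ℕ∞` (ordered pointwise),
there is a monomial `m` belonging to exactly one of them such that, with
`Y = {x | m x ≠ ∞}`, no monomial `m'` of the other antichain `Y`-absorbs `m`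
(i.e. satisfies `m' x ≤ m x` for all `x ∈ Y`); in particular `∑_{x ∈ Y} m x` is
finite. -/
theorem stmt_4 {X : Type*} [Fintype X] (p q : Set (X → ℕ∞))
    (hp : IsAntichain (· ≤ ·) p) (hq : IsAntichain (· ≤ ·) q) (hpq : p ≠ q) :
    ∃ m : X → ℕ∞,
      (∑ x ∈ Finset.univ.filter (fun x => m x ≠ ⊤), m x) ≠ ⊤ ∧
      ((m ∈ p ∧ m ∉ q ∧ ∀ m' ∈ q, ¬ ∀ x : X, m x ≠ ⊤ → m' x ≤ m x) ∨
       (m ∈ q ∧ m ∉ p ∧ ∀ m' ∈ p, ¬ ∀ x : X, m x ≠ ⊤ → m' x ≤ m x)) := by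
  -- Where `m x = ⊤` the inequality `m' x ≤ m x` is automatic, so `Y`-absorption is `m' ≤ m`.
  have key : ∀ m m' : X → ℕ∞, (∀ x : X, m x ≠ ⊤ → m' x ≤ m x) → m' ≤ m := by
    intro m m' h x
    by_cases hx : m x = ⊤
    · exact hx ▸ le_top
    · exact h x hx
  have hsum : ∀ m : X → ℕ∞,
      (∑ x ∈ Finset.univ.filter (fun x => m x ≠ ⊤), m x) ≠ ⊤ := by
    intro m
    refine WithTop.sum_ne_top.2 fun x hx => ?_
    exact (Finset.mem_filter.1 hx).2
  by_contra hcon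
  refine hpq (Set.Subset.antisymm ?_ ?_)
  · refine subset_of_mutual_absorption hp ?_ ?_ <;> intro m hm <;> by_contra! hno
    · exact hcon ⟨m, hsum m, Or.inl
        ⟨hm, fun h => hno m h le_rfl, fun m' hm' h => hno m' hm' (key m m' h)⟩⟩
    · exact hcon ⟨m, hsum m, Or.inr
        ⟨hm, fun h => hno m h le_rfl, fun m' hm' h => hno m' hm' (key m m' h)⟩⟩
  · refine subset_of_mutual_absorption hq ?_ ?_ <;> intro m hm <;> by_contra! hno
    · exact hcon ⟨m, hsum m, Or.inr
        ⟨hm, fun h => hno m h le_rfl, fun m' hm' h => hno m' hm' (key m m' h)⟩⟩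
    · exact hcon ⟨m, hsum m, Or.inl
        ⟨hm, fun h => hno m h le_rfl, fun m' hm' h => hno m' hm' (key m m' h)⟩⟩
end

section
/- Let S be a lattice semiring and let s, t ∈ S with s ≠ t. Then there exists a prime ideal P of S containing exactly one of s and t. -/
/-!
If `s` and `t` generated each other's principal ideals, absorption would give `s = s + t = t`.
Hence one of them, say `s`, lies outside the ideal generated by the other, and
`exists_prime_ge_notMem` enlarges that ideal to a prime ideal still omitting `s`.
-/

/-- A prime ideal of a (lattice) semiring `S`: a nonempty proper subset closed
under addition, absorbing under multiplication, and prime. -/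
def IsPrimeIdeal {S : Type*} [CommSemiring S] (P : Set S) : Prop :=
  P.Nonempty ∧ P ≠ Set.univ ∧
  (∀ s ∈ P, ∀ t ∈ P, s + t ∈ P) ∧
  (∀ s ∈ P, ∀ t : S, s * t ∈ P) ∧
  (∀ s t : S, s * t ∈ P → s ∈ P ∨ t ∈ P)

/-- An ideal omitting `x` omits every power of `x` because multiplication is idempotent, so Krull's
separation lemma extends it to a prime ideal omitting `x`. -/
theorem exists_prime_ge_notMem {S : Type*} [CommSemiring S] (hmul : ∀ a : S, a * a = a)
    (I : Ideal S) (x : S) (hx : x ∉ I) :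
    ∃ P : Ideal S, P.IsPrime ∧ I ≤ P ∧ x ∉ P := by
  have hdisj : Disjoint (I : Set S) (Submonoid.powers x : Set S) := by
    rw [Set.disjoint_right]
    rintro _ ⟨n, rfl⟩ hn
    -- `x ^ n * x = x` for every `n`, including `n = 0`.
    have hpow : x ^ n * x = x := by
      clear hn
      induction n with
      | zero => simp
      | succ k ih => rw [pow_succ, mul_assoc, hmul, ih]
    exact hx (hpow ▸ I.mul_mem_right x hn)
  obtain ⟨P, hP, hIP, hPd⟩ := Ideal.exists_le_prime_disjoint I (Submonoid.powers x) hdisj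
  exact ⟨P, hP, hIP, fun h => Set.disjoint_left.mp hPd h (Submonoid.mem_powers x)⟩

theorem Ideal.IsPrime.isPrimeIdeal {S : Type*} [CommSemiring S] {P : Ideal S} (hP : P.IsPrime) :
    IsPrimeIdeal (P : Set S) :=
  ⟨⟨0, P.zero_mem⟩, fun h => hP.ne_top (SetLike.coe_injective h),
    fun _ hs _ ht => P.add_mem hs ht, fun _ hs t => P.mul_mem_right t hs,
    fun _ _ h => hP.mem_or_mem h⟩

/-- In a lattice semiring, any two distinct elements are separated by a prime
ideal containing exactly one of them. -/
theorem stmt_9 {S : Type*} [CommSemiring S]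
    (hadd : ∀ a : S, a + a = a) (hmul : ∀ a : S, a * a = a)
    (habs : ∀ a b : S, a + a * b = a)
    (s t : S) (hst : s ≠ t) :
    ∃ P : Set S, IsPrimeIdeal P ∧ Xor' (s ∈ P) (t ∈ P) := by
  by_cases hs : s ∈ Ideal.span {t}
  · by_cases ht : t ∈ Ideal.span {s}
    · -- Mutual divisibility gives `s = s + t = t` by absorption.
      obtain ⟨a, ha⟩ := Ideal.mem_span_singleton.mp hs
      obtain ⟨b, hb⟩ := Ideal.mem_span_singleton.mp ht
      have h1 : t + s = t := by
        conv_lhs => rw [ha]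
        exact habs t a
      have h2 : s + t = s := by
        conv_lhs => rw [hb]
        exact habs s b
      exact absurd (h2.symm.trans ((add_comm s t).trans h1)) hst
    · obtain ⟨P, hP, hle, hn⟩ := exists_prime_ge_notMem hmul _ t ht
      exact ⟨P, hP.isPrimeIdeal, Or.inl ⟨hle (Ideal.mem_span_singleton_self s), hn⟩⟩
  · obtain ⟨P, hP, hle, hn⟩ := exists_prime_ge_notMem hmul _ s hs
    exact ⟨P, hP.isPrimeIdeal, Or.inr ⟨hle (Ideal.mem_span_singleton_self t), hn⟩⟩
end

section
/- Let S be a lattice semiring and define f(s) := {P : P is a prime ideal of S and s ∉ P}, a map from S to sets of prime ideals of S. Then f is injective, and for all s, t ∈ S it holds that f(s + t) = f(s) ∪ f(t) and f(s·t) = f(s) ∩ f(t). -/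
/-- If every prime ideal containing `t` contains `s`, then `s ≤ t` in the lattice order. -/
theorem add_eq_left_of_forall_prime {S : Type*} [CommSemiring S]
    (hmul : ∀ a : S, a * a = a) (habs : ∀ a b : S, a + a * b = a) {s t : S}
    (h : ∀ P : Set S, IsPrimeIdeal P → t ∈ P → s ∈ P) : t + s = t := by
  by_cases hd : Disjoint (Ideal.span {t} : Set S) (Submonoid.powers s : Set S)
  · obtain ⟨P, hP, hle, hPd⟩ := Ideal.exists_le_prime_disjoint _ _ hd
    have hs : s ∈ P := by
      refine h P ⟨⟨0, P.zero_mem⟩, ?_, fun a ha b hb => P.add_mem ha hb,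
        fun a ha b => P.mul_mem_right b ha, fun a b hab => hP.mem_or_mem hab⟩
        (hle (Ideal.mem_span_singleton_self t))
      intro hu
      exact hP.ne_top ((Ideal.eq_top_iff_one P).2 (by
        rw [← SetLike.mem_coe, hu]; trivial))
    exact absurd (Submonoid.mem_powers s) (Set.disjoint_left.1 hPd hs)
  · obtain ⟨x, hx, n, rfl⟩ := Set.not_disjoint_iff.1 hd
    obtain ⟨c, hc⟩ := Ideal.mem_span_singleton.1 hx
    -- The extra factor `s` covers the exponent `n = 0`, where `s ^ n = 1`.
    have hpow : s ^ n * s = s := by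
      clear hx hc
      induction n with
      | zero => simp
      | succ k ih => rw [pow_succ, mul_assoc, hmul, ih]
    have hst : s = t * (c * s) := by
      rw [← mul_assoc, ← hc]
      exact hpow.symm
    rw [hst]
    exact habs _ _

/-- In a lattice semiring, the map `f s = {P prime ideal | s ∉ P}` is injective,
turns sums into unions and products into intersections. -/
theorem stmt_10 {S : Type*} [CommSemiring S]
    (hadd : ∀ a : S, a + a = a) (hmul : ∀ a : S, a * a = a)
    (habs : ∀ a b : S, a + a * b = a) :
    Function.Injective (fun s : S => {P : Set S | IsPrimeIdeal P ∧ s ∉ P}) ∧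
    ∀ s t : S,
      {P : Set S | IsPrimeIdeal P ∧ s + t ∉ P} =
        {P : Set S | IsPrimeIdeal P ∧ s ∉ P} ∪ {P : Set S | IsPrimeIdeal P ∧ t ∉ P} ∧
      {P : Set S | IsPrimeIdeal P ∧ s * t ∉ P} =
        {P : Set S | IsPrimeIdeal P ∧ s ∉ P} ∩ {P : Set S | IsPrimeIdeal P ∧ t ∉ P} := by
  have hsum : ∀ P : Set S, IsPrimeIdeal P → ∀ s t : S, s + t ∈ P → s ∈ P := by
    intro P hP s t h
    have h' := hP.2.2.2.1 _ h s
    rwa [add_mul, hmul, mul_comm t s, habs] at h'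
  refine ⟨fun s t hst => ?_, fun s t => ⟨?_, ?_⟩⟩
  · have key : ∀ P : Set S, IsPrimeIdeal P → (s ∈ P ↔ t ∈ P) := by
      intro P hP
      have h := Set.ext_iff.1 hst P
      simp only [Set.mem_ofPred_eq, hP, true_and] at h
      exact not_iff_not.1 h
    have h1 := add_eq_left_of_forall_prime hmul habs fun P hP => (key P hP).1
    have h2 := add_eq_left_of_forall_prime hmul habs fun P hP => (key P hP).2
    rw [← h1, add_comm, h2]
  · ext P
    have h : IsPrimeIdeal P → (s + t ∈ P ↔ s ∈ P ∧ t ∈ P) := fun hP =>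
      ⟨fun h => ⟨hsum P hP s t h, hsum P hP t s (by rwa [add_comm])⟩,
        fun h => hP.2.2.1 s h.1 t h.2⟩
    simp only [Set.mem_ofPred_eq, Set.mem_union]
    tauto
  · ext P
    have h : IsPrimeIdeal P → (s * t ∈ P ↔ s ∈ P ∨ t ∈ P) := fun hP =>
      ⟨hP.2.2.2.2 s t, fun h => h.elim (fun h => hP.2.2.2.1 s h t)
        (fun h => by rw [mul_comm]; exact hP.2.2.2.1 t h s)⟩
    simp only [Set.mem_ofPred_eq, Set.mem_inter_iff]
    tauto
end

section
/- Let S be a finite lattice semiring. Then the family of predicates {h_s : s ∈ S is +-indecomposable}, where h_s(t) := (t + s = t), is separating: for all r, t ∈ S with r ≠ t there exists a +-indecomposable s ∈ S with h_s(r) ≠ h_s(t); moreover each h_s satisfies h_s(0) false, h_s(1) true, h_s(a + b) ↔ (h_s(a) ∨ h_s(b)) and h_s(a·b) ↔ (h_s(a) ∧ h_s(b)) for all a, b ∈ S. -/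
/-!
Write `s ≤ t` for `t + s = t`. Absorption and idempotence make this the order of a distributive
lattice with join `+` and meet `*`; in particular `s ≤ t` iff `t * s = s`
(`add_eq_left_iff_mul_eq`). Hence `h_s` preserves products for every `s`, and if `s` is
`+`-indecomposable and `s ≤ a + b`, then `s = a * s + b * s` forces `s ≤ a` or `s ≤ b`.

Separation amounts to: whenever `x ≰ t`, some indecomposable `s ≤ x` has `s ≰ t`
(`exists_indecomposable`). This is well-founded induction on `x`, which is available since `S` is
finite: a decomposition `x = a + b` into strictly smaller parts has at least one part `≰ t`.
-/

/-- The join and meet descriptions of the order agree. -/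
lemma add_eq_left_iff_mul_eq {S : Type*} [CommSemiring S]
    (hmul : ∀ a : S, a * a = a) (habs : ∀ a b : S, a + a * b = a) (t s : S) :
    t + s = t ↔ t * s = s := by
  constructor
  · intro h
    calc t * s = (t + s) * s := by rw [h]
      _ = s + s * t := by rw [add_mul, hmul, add_comm, mul_comm t s]
      _ = s := habs s t
  · intro h
    rw [← h, habs]

/-- If `x` is not below `t`, some `+`-indecomposable element below `x` is not below `t`. -/
lemma exists_indecomposable {S : Type*} [CommSemiring S] [Finite S]
    (hadd : ∀ a : S, a + a = a) (t x : S) (hx : t + x ≠ t) :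
    ∃ s : S, (s ≠ 0 ∧ ∀ a b : S, a + b = s → a = s ∨ b = s) ∧ x + s = x ∧ t + s ≠ t := by
  letI : PartialOrder S :=
    { le := fun a b => b + a = b
      le_refl := hadd
      le_trans := fun a b c (h₁ : b + a = b) (h₂ : c + b = c) => by
        change c + a = c
        rw [← h₂, add_assoc, h₁]
      le_antisymm := fun a b (h₁ : b + a = b) (h₂ : a + b = a) => by
        rw [← h₂, add_comm, h₁] }
  induction x using WellFoundedLT.induction with
  | ind x ih =>
    by_cases hdec : ∀ a b : S, a + b = x → a = x ∨ b = x
    · refine ⟨x, ⟨?_, hdec⟩, hadd x, hx⟩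
      rintro rfl
      exact hx (add_zero t)
    · push Not at hdec
      obtain ⟨a, b, hab, ha, hb⟩ := hdec
      have hax : x + a = x := by rw [← hab, add_right_comm, hadd]
      have hbx : x + b = x := by rw [← hab, add_assoc, hadd]
      have below : ∀ c : S, x + c = x → c ≠ x → t + c ≠ t →
          ∃ s : S, (s ≠ 0 ∧ ∀ a b : S, a + b = s → a = s ∨ b = s) ∧ x + s = x ∧ t + s ≠ t := by
        intro c hcx hc hct
        obtain ⟨s, hs, hcs, hts⟩ := ih c (lt_of_le_of_ne hcx hc) hct
        exact ⟨s, hs, by rw [← hcx, add_assoc, hcs], hts⟩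
      by_cases hta : t + a = t
      · refine below b hbx hb fun htb => hx ?_
        rw [← hab, ← add_assoc, hta, htb]
      · exact below a hax ha hta

/-- In a finite lattice semiring, the family `{h_s | s +-indecomposable}` with
`h_s t := (t + s = t)` is separating, and each `h_s` is a Boolean-valued
homomorphism: false at `0`, true at `1`, turning sums into disjunctions and
products into conjunctions. -/
theorem stmt_14 {S : Type*} [CommSemiring S] [Fintype S]
    (hadd : ∀ a : S, a + a = a) (hmul : ∀ a : S, a * a = a)
    (habs : ∀ a b : S, a + a * b = a) :
    (∀ r t : S, r ≠ t → ∃ s : S,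
        (s ≠ 0 ∧ ∀ a b : S, a + b = s → a = s ∨ b = s) ∧
        ¬ ((r + s = r) ↔ (t + s = t))) ∧
    ∀ s : S, (s ≠ 0 ∧ ∀ a b : S, a + b = s → a = s ∨ b = s) →
      ¬ ((0 : S) + s = 0) ∧ ((1 : S) + s = 1) ∧
      ∀ a b : S,
        ((a + b) + s = a + b ↔ (a + s = a ∨ b + s = b)) ∧
        (a * b + s = a * b ↔ (a + s = a ∧ b + s = b)) := by
  have key := add_eq_left_iff_mul_eq hmul habs
  refine ⟨fun r t hrt => ?_, fun s hs => ⟨?_, ?_, fun a b => ⟨⟨?_, ?_⟩, ⟨?_, ?_⟩⟩⟩⟩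
  · by_cases h : t + r = t
    · have h' : r + t ≠ r := fun h' => hrt (by rw [← h', add_comm, h])
      obtain ⟨s, hs, h₁, h₂⟩ := exists_indecomposable hadd r t h'
      exact ⟨s, hs, fun hiff => h₂ (hiff.2 h₁)⟩
    · obtain ⟨s, hs, h₁, h₂⟩ := exists_indecomposable hadd t r h
      exact ⟨s, hs, fun hiff => h₂ (hiff.1 h₁)⟩
  · rw [zero_add]
    exact hs.1
  · rw [key, one_mul]
  · rw [key, key, key, add_mul]
    exact hs.2 _ _
  · rintro (h | h)
    · rw [add_right_comm, h]
    · rw [add_assoc, h]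
  · intro h
    -- `s ≤ a * b`, while `a * b` lies below both `a` and `b`.
    constructor
    · rw [← habs a b, add_assoc, h]
    · rw [← habs b a, mul_comm b a, add_assoc, h]
  · rintro ⟨h₁, h₂⟩
    rw [key] at *
    rw [mul_assoc, h₂, h₁]
end
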